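/- arXiv:2207.02136 — 2 statements merged into one kernel-verified Lean document; each statement's English description precedes it below -/
import Mathlib

section
/- There exists a family of DAGs G_ℓ with flows X_ℓ (parametrized by ℓ ≥ 1), such that G_ℓ has 7·2^ℓ − 5 edges, the greedy-weight algorithm decomposes X_ℓ into exactly 1 + 2^{ℓ+1} paths, while X_ℓ admits a flow decomposition into 2ℓ + 2 paths; hence the approximation ratio of greedy-weight for minimum flow decomposition with nonnegative weights is Ω(m / log m) in the worst case. -/
open Finset

def IsWalk {V E : Type} (src tgt : E → V) : V → V → List E → Prop
  | a, b, [] => a = b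
  | a, b, e :: L => src e = a ∧ IsWalk src tgt (tgt e) b L

def IsPath {V E : Type} (src tgt : E → V) (s t : V) (L : List E) : Prop :=
  L ≠ [] ∧ IsWalk src tgt s t L

def IsDAG {V E : Type} (src tgt : E → V) : Prop :=
  ∀ (v : V) (L : List E), L ≠ [] → ¬ IsWalk src tgt v v L

def IsFlowN {V E : Type} [Fintype E] [DecidableEq V] (src tgt : E → V) (s t : V)
    (X : E → ℕ) : Prop :=
  ∀ v : V, v ≠ s → v ≠ t →
    (∑ e, if tgt e = v then X e else 0) = ∑ e, if src e = v then X e else 0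

/-- A valid run of the greedy-weight algorithm: at every step a heaviest `s`-`t`
path is removed with its maximum carryable weight. -/
def GreedyRun {V E : Type} [DecidableEq E] (src tgt : E → V) (s t : V)
    (seq : ℕ → E → ℕ) (P : ℕ → List E) (w : ℕ → ℕ) : Prop :=
  ∀ j,
    (seq j ≠ 0 →
      IsPath src tgt s t (P j) ∧
      (∀ e ∈ P j, w j ≤ seq j e) ∧
      (∀ (L : List E) (w' : ℕ), IsPath src tgt s t L → (∀ e ∈ L, w' ≤ seq j e) →
        w' ≤ w j) ∧
      (∀ e, seq (j + 1) e = seq j e - (if e ∈ P j then w j else 0))) ∧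
    (seq j = 0 → seq (j + 1) = 0)

/-!
Doubling a network `G` means running two copies of it in series, `s → G → G → t`, while allowing
either copy to be bypassed through an extra edge. Start with two parallel edges and double `ℓ`
times. A path through all copies, the backbone, then carries weight `2 ^ (ℓ + 1)`, more than any
bypass, so greedy removes it first. This saturates every edge joining two consecutive copies, and
what remains, a flow of value `2 ^ (ℓ + 1)`, is removed one unit at a time: every path uses an edge
of one of the innermost pairs, and each of these edges now carries a single unit. A better
decomposition spends two paths per doubling on saturating the bypasses; after that both copies
carry the same flow and can be decomposed simultaneously.
-/

section Walk

variable {V E V' E' : Type} {src tgt : E → V} {a b c : V} {e : E} {L M : List E}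

theorem isWalk_append_iff :
    IsWalk src tgt a c (L ++ M) ↔ ∃ b, IsWalk src tgt a b L ∧ IsWalk src tgt b c M := by
  induction L generalizing a with
  | nil => simp [IsWalk]
  | cons e L ih => simp only [List.cons_append, IsWalk, ih, and_assoc, exists_and_left]

theorem IsWalk.append (hL : IsWalk src tgt a b L) (hM : IsWalk src tgt b c M) :
    IsWalk src tgt a c (L ++ M) :=
  isWalk_append_iff.2 ⟨b, hL, hM⟩

theorem IsWalk.map {src' tgt' : E' → V'} {φ : V → V'} {σ : E → E'}
    (hsrc : ∀ e, src' (σ e) = φ (src e)) (htgt : ∀ e, tgt' (σ e) = φ (tgt e))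
    (h : IsWalk src tgt a b L) : IsWalk src' tgt' (φ a) (φ b) (L.map σ) := by
  induction L generalizing a with
  | nil => exact congrArg φ h
  | cons e L ih => exact ⟨by rw [hsrc, h.1], by rw [htgt]; exact ih h.2⟩

theorem isWalk_comp_iff {φ : V → V'} (hφ : φ.Injective) {σ : E' → E} {L : List E'} :
    IsWalk (fun e ↦ φ (src (σ e))) (fun e ↦ φ (tgt (σ e))) (φ a) (φ b) L ↔
      IsWalk src tgt a b (L.map σ) := by
  induction L generalizing a with
  | nil => exact hφ.eq_iff
  | cons e L ih => simp only [List.map_cons, IsWalk, hφ.eq_iff, ih]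

theorem IsWalk.exists_leaving_edge {S : Set V} (h : IsWalk src tgt a b L) (ha : a ∈ S)
    (hb : b ∉ S) : ∃ e ∈ L, src e ∈ S ∧ tgt e ∉ S := by
  induction L generalizing a with
  | nil => cases h; exact absurd ha hb
  | cons e L ih =>
    by_cases he : tgt e ∈ S
    · obtain ⟨e', he', hcross⟩ := ih h.2 he
      exact ⟨e', List.mem_cons_of_mem e he', hcross⟩
    · exact ⟨e, List.mem_cons_self, h.1 ▸ ha, he⟩

theorem IsWalk.rank_le {α : Type*} [Preorder α] {rank : V → α}
    (hrank : ∀ e, rank (src e) < rank (tgt e)) (h : IsWalk src tgt a b L) : rank a ≤ rank b := by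
  induction L generalizing a with
  | nil => exact (congrArg rank h).le
  | cons e L ih => exact h.1 ▸ (hrank e).le.trans (ih h.2)

theorem isDAG_of_rank_lt {α : Type*} [Preorder α] {rank : V → α}
    (hrank : ∀ e, rank (src e) < rank (tgt e)) : IsDAG src tgt := by
  rintro v (_ | ⟨e, L⟩) hL h
  · exact hL rfl
  · exact (h.1 ▸ hrank e).not_ge (h.2.rank_le hrank)

theorem IsDAG.not_isWalk_tgt_src (hG : IsDAG src tgt) : ¬ IsWalk src tgt (tgt e) (src e) L :=
  fun h ↦ hG (src e) (e :: L) (List.cons_ne_nil e L) ⟨rfl, h⟩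

theorem IsWalk.exists_walk_to_src (h : IsWalk src tgt a b L) (he : e ∈ L) :
    ∃ M, IsWalk src tgt a (src e) M := by
  obtain ⟨M, N, rfl⟩ := List.append_of_mem he
  obtain ⟨v, hM, hv, -⟩ := isWalk_append_iff.1 h
  exact ⟨M, hv ▸ hM⟩

theorem IsDAG.notMem_of_isWalk_cons (hG : IsDAG src tgt) (h : IsWalk src tgt a b (e :: L)) :
    e ∉ L := fun he ↦
  let ⟨_, hM⟩ := h.2.exists_walk_to_src he
  hG.not_isWalk_tgt_src hM

theorem IsDAG.isWalk_eq_of_subset (hG : IsDAG src tgt) (hb : ∀ e, src e ≠ b)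
    (hL : IsWalk src tgt a b L) (hM : IsWalk src tgt a b M) (hsub : L ⊆ M) : L = M := by
  induction M generalizing a L with
  | nil => exact List.subset_nil.1 hsub
  | cons e M ih =>
    rcases L with _ | ⟨e', L⟩
    · exact absurd (hM.1.trans hL) (hb e)
    have heq : e' = e := by
      refine (List.mem_cons.1 (hsub List.mem_cons_self)).resolve_right fun he' ↦ ?_
      obtain ⟨N, hN⟩ := hM.2.exists_walk_to_src he'
      rw [hL.1, ← hM.1] at hN
      exact hG.not_isWalk_tgt_src hN
    subst heq
    rw [ih hL.2 hM.2 fun x hx ↦ (List.mem_cons.1 (hsub (List.mem_cons_of_mem e' hx))).resolve_left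
      fun h ↦ hG.notMem_of_isWalk_cons hL (h ▸ hx)]

theorem IsDAG.successor_induction [Finite E] (hG : IsDAG src tgt) {p : E → Prop}
    (h : ∀ e, (∀ e', src e' = tgt e → p e') → p e) (e : E) : p e := by
  let follows (e' e : E) : Prop := ∃ L, IsWalk src tgt (tgt e) (src e') L
  have : IsTrans E follows :=
    ⟨fun _ e _ ⟨_, hL⟩ ⟨_, hM⟩ ↦ ⟨_, hM.append (M := e :: _) ⟨rfl, hL⟩⟩⟩
  have : Std.Irrefl follows := ⟨fun _ ⟨_, hL⟩ ↦ hG.not_isWalk_tgt_src hL⟩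
  exact (Finite.wellFounded_of_trans_of_irrefl follows).induction e
    fun e ih ↦ h e fun e' he' ↦ ih e' ⟨[], he'.symm⟩

end Walk

section Flow

variable {V E : Type} [DecidableEq V] [Fintype E] {src tgt : E → V} {s t u v : V}
  {X Y : E → ℕ} {F G : ℕ}

/-- The total amount of `X` on the edges whose `f`-endpoint is `v`: the inflow at `v` for `f = tgt`
and the outflow for `f = src`. -/
def endpointSum (f : E → V) (X : E → ℕ) (v : V) : ℕ :=
  ∑ e, if f e = v then X e else 0

theorem endpointSum_add (f : E → V) (X Y : E → ℕ) (v : V) :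
    endpointSum f (X + Y) v = endpointSum f X v + endpointSum f Y v := by
  simp only [endpointSum, Pi.add_apply, ← sum_add_distrib, ← ite_add_zero]

theorem endpointSum_single [DecidableEq E] (f : E → V) (e : E) (w : ℕ) (v : V) :
    endpointSum f (Pi.single e w) v = if v = f e then w else 0 := by
  rw [endpointSum, Fintype.sum_eq_single e fun x hx ↦ by simp [hx], Pi.single_eq_same]
  simp only [eq_comm]

theorem endpointSum_pos_iff {f : E → V} :
    0 < endpointSum f X v ↔ ∃ e, f e = v ∧ 0 < X e := by
  simp only [endpointSum, Finset.sum_pos_iff, mem_univ, true_and, Nat.pos_iff_ne_zero,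
    ite_ne_right_iff]

/-- `X` is an `s`-`t` flow of value `F`. The value is added to the inflow at `s` and to the outflow
at `t`, so that the balance condition holds at every vertex and involves no subtraction. -/
def IsFlowOfValue (src tgt : E → V) (s t : V) (X : E → ℕ) (F : ℕ) : Prop :=
  ∀ v, endpointSum tgt X v + (if v = s then F else 0) =
    endpointSum src X v + if v = t then F else 0

namespace IsFlowOfValue

theorem isFlowN (hX : IsFlowOfValue src tgt s t X F) : IsFlowN src tgt s t X :=
  fun v hs ht ↦ by
    have balance := hX v
    rw [if_neg hs, if_neg ht] at balance
    exact balance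

theorem zero : IsFlowOfValue src tgt s t 0 0 := fun v ↦ by simp [endpointSum]

theorem add (hX : IsFlowOfValue src tgt s t X F) (hY : IsFlowOfValue src tgt s t Y G) :
    IsFlowOfValue src tgt s t (X + Y) (F + G) := fun v ↦ by
  have hXv := hX v
  have hYv := hY v
  rw [endpointSum_add, endpointSum_add]
  split_ifs at * <;> omega

theorem of_add (hXY : IsFlowOfValue src tgt s t (X + Y) (F + G))
    (hY : IsFlowOfValue src tgt s t Y G) : IsFlowOfValue src tgt s t X F := fun v ↦ by
  have hXYv := hXY v
  have hYv := hY v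
  rw [endpointSum_add, endpointSum_add] at hXYv
  split_ifs at * <;> omega

theorem trans (hX : IsFlowOfValue src tgt s u X F) (hY : IsFlowOfValue src tgt u t Y F) :
    IsFlowOfValue src tgt s t (X + Y) F := fun v ↦ by
  have hXv := hX v
  have hYv := hY v
  rw [endpointSum_add, endpointSum_add]
  omega

theorem single [DecidableEq E] (e : E) (w : ℕ) :
    IsFlowOfValue src tgt (src e) (tgt e) (Pi.single e w) w := fun v ↦ by
  rw [endpointSum_single, endpointSum_single, add_comm]

theorem ne_zero (hX : IsFlowOfValue src tgt s t X F) (hst : s ≠ t) (hF : F ≠ 0) : X ≠ 0 := by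
  rintro rfl
  exact hF (by simpa [endpointSum, hst] using hX s)

theorem eq_zero (hG : IsDAG src tgt) (hX : IsFlowOfValue src tgt s t X 0) : X = 0 := by
  refine funext (hG.successor_induction fun e ih ↦ ?_)
  have balance : endpointSum tgt X (tgt e) = endpointSum src X (tgt e) := by simpa using hX (tgt e)
  by_contra he
  obtain ⟨e', hsrc, hpos⟩ := endpointSum_pos_iff.1
    (balance ▸ endpointSum_pos_iff.2 ⟨e, rfl, Nat.pos_of_ne_zero he⟩)
  exact hpos.ne' (ih e' hsrc)

theorem exists_pos_walk (hG : IsDAG src tgt) (hX : IsFlowOfValue src tgt s t X F) (e : E) :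
    0 < X e → ∃ L, IsWalk src tgt (tgt e) t L ∧ ∀ x ∈ L, 0 < X x := by
  induction e using hG.successor_induction with | h e ih
  intro he
  by_cases ht : tgt e = t
  · exact ⟨[], ht, List.forall_mem_nil _⟩
  have outflow_pos : 0 < endpointSum src X (tgt e) := by
    have inflow_pos : 0 < endpointSum tgt X (tgt e) := endpointSum_pos_iff.2 ⟨e, rfl, he⟩
    have balance := hX (tgt e)
    rw [if_neg ht] at balance
    omega
  obtain ⟨e', hsrc, hpos⟩ := endpointSum_pos_iff.1 outflow_pos
  obtain ⟨L, hL, hLpos⟩ := ih e' hsrc hpos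
  exact ⟨e' :: L, ⟨hsrc, hL⟩, List.forall_mem_cons.2 ⟨hpos, hLpos⟩⟩

theorem exists_pos_path (hG : IsDAG src tgt) (hX : IsFlowOfValue src tgt s t X F) (hst : s ≠ t)
    (hF : F ≠ 0) : ∃ L, IsPath src tgt s t L ∧ ∀ e ∈ L, 0 < X e := by
  have outflow_pos : 0 < endpointSum src X s := by
    have balance := hX s
    rw [if_pos rfl, if_neg hst] at balance
    omega
  obtain ⟨e, hsrc, hpos⟩ := endpointSum_pos_iff.1 outflow_pos
  obtain ⟨L, hL, hLpos⟩ := hX.exists_pos_walk hG e hpos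
  exact ⟨e :: L, ⟨List.cons_ne_nil e L, hsrc, hL⟩, List.forall_mem_cons.2 ⟨hpos, hLpos⟩⟩

end IsFlowOfValue

end Flow

section PathFlow

variable {V E : Type} [DecidableEq E] {src tgt : E → V} {s t : V}

/-- The flow of weight `w` along the edges of `L`. Repetitions in `L` are not counted, so this is
meant for lists without duplicates, such as walks in a DAG. -/
def pathFlow (L : List E) (w : ℕ) : E → ℕ :=
  fun e ↦ if e ∈ L then w else 0

/-- The flow which a list of weighted paths decomposes. -/
def superposition (D : List (List E × ℕ)) : E → ℕ :=
  fun e ↦ (D.map fun p ↦ pathFlow p.1 p.2 e).sum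

theorem superposition_cons (p : List E × ℕ) (D : List (List E × ℕ)) :
    superposition (p :: D) = pathFlow p.1 p.2 + superposition D :=
  funext fun _ ↦ List.sum_cons

theorem superposition_eq_sum (D : List (List E × ℕ)) (e : E) :
    superposition D e = ∑ i, if e ∈ (D.get i).1 then (D.get i).2 else 0 :=
  (Fin.sum_univ_fun_getElem D fun p ↦ pathFlow p.1 p.2 e).symm

variable [DecidableEq V] [Fintype E]

theorem IsWalk.isFlowOfValue (hG : IsDAG src tgt) {L : List E} (h : IsWalk src tgt s t L)
    (w : ℕ) : IsFlowOfValue src tgt s t (pathFlow L w) w := by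
  induction L generalizing s with
  | nil =>
    obtain rfl : s = t := h
    intro v
    simp [endpointSum, pathFlow]
  | cons e L ih =>
    have he : e ∉ L := hG.notMem_of_isWalk_cons h
    have split_head : pathFlow (e :: L) w = Pi.single e w + pathFlow L w := by
      funext x
      by_cases hx : x = e
      · subst hx; simp [pathFlow, he]
      · simp [pathFlow, hx]
    rw [split_head, ← h.1]
    exact (IsFlowOfValue.single e w).trans (ih h.2)

theorem isFlowOfValue_superposition (hG : IsDAG src tgt) {D : List (List E × ℕ)}
    (hD : ∀ p ∈ D, IsWalk src tgt s t p.1) :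
    IsFlowOfValue src tgt s t (superposition D) (D.map Prod.snd).sum := by
  induction D with
  | nil => exact IsFlowOfValue.zero
  | cons p D ih =>
    rw [superposition_cons, List.map_cons, List.sum_cons]
    exact ((hD p List.mem_cons_self).isFlowOfValue hG p.2).add
      (ih fun q hq ↦ hD q (List.mem_cons_of_mem p hq))

end PathFlow

namespace GreedyRun

variable {V E : Type} [DecidableEq E] {src tgt : E → V} {s t : V} {seq : ℕ → E → ℕ}
  {P : ℕ → List E} {w : ℕ → ℕ} {j : ℕ}

theorem eq_next_add_pathFlow (hrun : GreedyRun src tgt s t seq P w) (hj : seq j ≠ 0) :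
    seq j = seq (j + 1) + pathFlow (P j) (w j) := by
  obtain ⟨-, hcarry, -, hnext⟩ := (hrun j).1 hj
  funext e
  rw [Pi.add_apply, hnext e, pathFlow, Nat.sub_add_cancel]
  split_ifs with he
  · exact hcarry e he
  · exact Nat.zero_le _

theorem next_eq_of_backbone (hrun : GreedyRun src tgt s t seq P w) (hG : IsDAG src tgt)
    (ht : ∀ e, src e ≠ t) {Y : E → ℕ} {L : List E} {B : ℕ} (hL : IsPath src tgt s t L)
    (hoff : ∀ e ∉ L, Y e < B) (htight : ∃ e ∈ L, Y e = 0) (hj : seq j = Y + pathFlow L B) :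
    seq (j + 1) = Y := by
  by_cases h0 : seq j = 0
  · rw [(hrun j).2 h0]
    exact (add_eq_zero.1 (hj ▸ h0)).1.symm
  obtain ⟨hP, hcarry, hmax, -⟩ := (hrun j).1 h0
  have hval : ∀ e, seq j e = Y e + if e ∈ L then B else 0 := fun e ↦ congrFun hj e
  have B_le : B ≤ w j := hmax L B hL fun e he ↦ by rw [hval, if_pos he]; exact Nat.le_add_left _ _
  have path_eq : P j = L := by
    refine hG.isWalk_eq_of_subset ht hP.2 hL.2 fun e he ↦ ?_
    by_contra heL
    have := hcarry e he
    rw [hval, if_neg heL, add_zero] at this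
    exact (hoff e heL).not_ge (B_le.trans this)
  have weight_eq : w j = B := by
    obtain ⟨e, he, hYe⟩ := htight
    have := hcarry e (path_eq ▸ he)
    rw [hval, if_pos he, hYe, zero_add] at this
    exact this.antisymm B_le
  have hsum := hrun.eq_next_add_pathFlow h0
  rw [path_eq, weight_eq, hj] at hsum
  exact (add_right_cancel hsum).symm

variable [DecidableEq V] [Fintype E] {S : Set V} {F N : ℕ}

theorem weight_eq_one (hrun : GreedyRun src tgt s t seq P w) (hG : IsDAG src tgt) (hsS : s ∈ S)
    (htS : t ∉ S) (hcut : ∀ e, src e ∈ S → tgt e ∉ S → seq j e ≤ 1)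
    (hflow : IsFlowOfValue src tgt s t (seq j) F) (hF : F ≠ 0) : w j = 1 := by
  have hst : s ≠ t := ne_of_mem_of_not_mem hsS htS
  obtain ⟨hP, hcarry, hmax, -⟩ := (hrun j).1 (hflow.ne_zero hst hF)
  apply le_antisymm
  · obtain ⟨e, he, hsrc, htgt⟩ := hP.2.exists_leaving_edge hsS htS
    exact (hcarry e he).trans (hcut e hsrc htgt)
  · obtain ⟨L, hL, hLpos⟩ := hflow.exists_pos_path hG hst hF
    exact hmax L 1 hL hLpos

theorem isFlowOfValue_after_unit_steps (hrun : GreedyRun src tgt s t seq P w)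
    (hG : IsDAG src tgt) (hsS : s ∈ S) (htS : t ∉ S)
    (hcut : ∀ e, src e ∈ S → tgt e ∉ S → seq j e ≤ 1) (k : ℕ)
    (hflow : IsFlowOfValue src tgt s t (seq j) (F + k)) :
    IsFlowOfValue src tgt s t (seq (j + k)) F := by
  induction k generalizing j with
  | zero => exact hflow
  | succ k ih =>
    have hj : seq j ≠ 0 := hflow.ne_zero (ne_of_mem_of_not_mem hsS htS) (Nat.succ_ne_zero _)
    have hstep := hrun.eq_next_add_pathFlow hj
    rw [hrun.weight_eq_one hG hsS htS hcut hflow (Nat.succ_ne_zero _)] at hstep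
    have hnext : IsFlowOfValue src tgt s t (seq (j + 1)) (F + k) := by
      rw [hstep, ← add_assoc] at hflow
      exact hflow.of_add (((hrun j).1 hj).1.2.isFlowOfValue hG 1)
    rw [add_comm k, ← add_assoc]
    refine ih (fun e hsrc htgt ↦ le_trans ?_ (hcut e hsrc htgt)) hnext
    rw [hstep]
    exact Nat.le_add_right _ _

theorem length_eq_of_backbone (hrun : GreedyRun src tgt s t seq P w) (hG : IsDAG src tgt)
    (ht : ∀ e, src e ≠ t) {Y : E → ℕ} {L : List E} {B : ℕ} (hL : IsPath src tgt s t L)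
    (hoff : ∀ e ∉ L, Y e < B) (htight : ∃ e ∈ L, Y e = 0) (h0 : seq 0 = Y + pathFlow L B)
    (hsS : s ∈ S) (htS : t ∉ S) (hcut : ∀ e, src e ∈ S → tgt e ∉ S → Y e ≤ 1)
    (hY : IsFlowOfValue src tgt s t Y (N + 1)) : seq (1 + (N + 1)) = 0 ∧ seq (N + 1) ≠ 0 := by
  have h1 : seq 1 = Y := hrun.next_eq_of_backbone hG ht hL hoff htight h0
  subst h1
  constructor
  · exact (hrun.isFlowOfValue_after_unit_steps hG hsS htS hcut (N + 1)
      ((zero_add (N + 1)).symm ▸ hY)).eq_zero hG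
  · rw [add_comm N] at hY ⊢
    exact (hrun.isFlowOfValue_after_unit_steps hG hsS htS hcut N hY).ne_zero
      (ne_of_mem_of_not_mem hsS htS) one_ne_zero

end GreedyRun

/-- The `s`-`t` flow `X` on a DAG is removed by greedy-weight in exactly `1 + N` steps, whatever the
tie-breaking, although it decomposes into `K` weighted paths. -/
structure IsGreedyGap {V E : Type} [Fintype E] [DecidableEq V] [DecidableEq E] (src tgt : E → V)
    (s t : V) (X : E → ℕ) (N K : ℕ) : Prop where
  isDAG : IsDAG src tgt
  tgt_ne : ∀ e, tgt e ≠ s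
  src_ne : ∀ e, src e ≠ t
  isFlowN : IsFlowN src tgt s t X
  ne_zero : X ≠ 0
  greedy : ∀ (seq : ℕ → E → ℕ) (P : ℕ → List E) (w : ℕ → ℕ), seq 0 = X →
    GreedyRun src tgt s t seq P w → seq (1 + N) = 0 ∧ seq N ≠ 0
  decomposition : ∃ (P : Fin K → List E) (w : Fin K → ℕ),
    (∀ i, IsPath src tgt s t (P i)) ∧ ∀ e, X e = ∑ i, if e ∈ P i then w i else 0

section Reindex

variable {V E V' E' : Type} {src tgt : E → V} {s t : V} (φ : V ≃ V') (σ : E' ≃ E)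

theorem isPath_reindex_iff {L : List E'} :
    IsPath (fun e ↦ φ (src (σ e))) (fun e ↦ φ (tgt (σ e))) (φ s) (φ t) L ↔
      IsPath src tgt s t (L.map σ) := by
  simp only [IsPath, ne_eq, List.map_eq_nil_iff, isWalk_comp_iff φ.injective]

theorem IsPath.reindex {L : List E} (h : IsPath src tgt s t L) :
    IsPath (fun e ↦ φ (src (σ e))) (fun e ↦ φ (tgt (σ e))) (φ s) (φ t) (L.map σ.symm) :=
  (isPath_reindex_iff φ σ).2 (by simpa using h)

theorem IsDAG.reindex (hG : IsDAG src tgt) :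
    IsDAG (fun e ↦ φ (src (σ e))) (fun e ↦ φ (tgt (σ e))) := by
  intro v L hL h
  obtain ⟨v, rfl⟩ := φ.surjective v
  exact hG v (L.map σ) (mt List.map_eq_nil_iff.1 hL) ((isWalk_comp_iff φ.injective).1 h)

theorem IsFlowN.reindex [Fintype E] [Fintype E'] [DecidableEq V] [DecidableEq V'] {X : E → ℕ}
    (hX : IsFlowN src tgt s t X) :
    IsFlowN (fun e ↦ φ (src (σ e))) (fun e ↦ φ (tgt (σ e))) (φ s) (φ t) (X ∘ σ) := by
  intro v hs ht
  obtain ⟨v, rfl⟩ := φ.surjective v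
  simp only [φ.apply_eq_iff_eq, Function.comp_apply]
  rw [σ.sum_comp fun e ↦ if tgt e = v then X e else 0,
    σ.sum_comp fun e ↦ if src e = v then X e else 0]
  exact hX v (mt (congrArg φ) hs) (mt (congrArg φ) ht)

variable [DecidableEq E] [DecidableEq E']

theorem GreedyRun.of_reindex {seq : ℕ → E' → ℕ} {P : ℕ → List E'} {w : ℕ → ℕ}
    (h : GreedyRun (fun e ↦ φ (src (σ e))) (fun e ↦ φ (tgt (σ e))) (φ s) (φ t) seq P w) :
    GreedyRun src tgt s t (fun j ↦ seq j ∘ σ.symm) (fun j ↦ (P j).map σ) w := by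
  have comp_eq_zero : ∀ Y : E' → ℕ, Y ∘ σ.symm = 0 ↔ Y = 0 := fun Y ↦
    σ.symm.surjective.injective_comp_right.eq_iff' rfl
  intro j
  refine ⟨fun hj ↦ ?_, fun hj ↦ ?_⟩
  · obtain ⟨hP, hcarry, hmax, hnext⟩ := (h j).1 (mt (comp_eq_zero _).2 hj)
    refine ⟨(isPath_reindex_iff φ σ).1 hP, by simpa using hcarry, fun L w' hL hw' ↦ ?_,
      fun e ↦ ?_⟩
    · exact hmax (L.map σ.symm) w' (hL.reindex φ σ) (by simpa using hw')
    · obtain ⟨e, rfl⟩ := σ.surjective e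
      simpa [List.mem_map_of_injective σ.injective] using hnext e
  · exact (comp_eq_zero _).2 ((h j).2 ((comp_eq_zero _).1 hj))

theorem IsGreedyGap.reindex [Fintype E] [Fintype E'] [DecidableEq V] [DecidableEq V'] {X : E → ℕ}
    {N K : ℕ} (h : IsGreedyGap src tgt s t X N K) :
    IsGreedyGap (fun e ↦ φ (src (σ e))) (fun e ↦ φ (tgt (σ e))) (φ s) (φ t) (X ∘ σ) N K where
  isDAG := h.isDAG.reindex φ σ
  tgt_ne e := φ.injective.ne (h.tgt_ne _)
  src_ne e := φ.injective.ne (h.src_ne _)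
  isFlowN := h.isFlowN.reindex φ σ
  ne_zero := fun hX ↦ h.ne_zero (σ.surjective.injective_comp_right hX)
  greedy seq P w h0 hrun := by
    obtain ⟨hend, hlast⟩ := h.greedy _ _ w (by simp [h0, Function.comp_assoc])
      (hrun.of_reindex φ σ)
    exact ⟨σ.symm.surjective.injective_comp_right hend, fun hN ↦ hlast (by rw [hN]; rfl)⟩
  decomposition := by
    obtain ⟨P, w, hP, hX⟩ := h.decomposition
    refine ⟨fun i ↦ (P i).map σ.symm, w, fun i ↦ (hP i).reindex φ σ, fun e ↦ ?_⟩
    simp [hX, List.mem_map, σ.symm_apply_eq]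

end Reindex

/-- The vertices of the graph `G_h`. The graph `G_0` has just a source and a sink; `G_(h+1)`
consists of two copies of `G_h` together with a new source and a new sink. -/
inductive DoublingVertex : ℕ → Type
  | source {h : ℕ} : DoublingVertex h
  | sink {h : ℕ} : DoublingVertex h
  | left {h : ℕ} (v : DoublingVertex h) : DoublingVertex (h + 1)
  | right {h : ℕ} (v : DoublingVertex h) : DoublingVertex (h + 1)
  deriving DecidableEq

/-- The edges of the graph `G_h`: two parallel edges for `h = 0`, and for `h + 1` those of the two
copies of `G_h`, the central edge from the left copy to the right one, and four edges attaching
either copy to the new source and the new sink. -/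
inductive DoublingEdge : ℕ → Type
  | heavy : DoublingEdge 0
  | light : DoublingEdge 0
  | left {h : ℕ} (e : DoublingEdge h) : DoublingEdge (h + 1)
  | right {h : ℕ} (e : DoublingEdge h) : DoublingEdge (h + 1)
  | central {h : ℕ} : DoublingEdge (h + 1)
  | sourceLeft {h : ℕ} : DoublingEdge (h + 1)
  | sourceRight {h : ℕ} : DoublingEdge (h + 1)
  | leftSink {h : ℕ} : DoublingEdge (h + 1)
  | rightSink {h : ℕ} : DoublingEdge (h + 1)
  deriving DecidableEq

namespace DoublingVertex

instance instFinite : ∀ h, Finite (DoublingVertex h)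
  | 0 => Finite.of_surjective (fun b : Bool ↦ cond b source sink) fun
    | source => ⟨true, rfl⟩
    | sink => ⟨false, rfl⟩
  | h + 1 =>
    have := instFinite h
    Finite.of_surjective (Sum.elim (Sum.elim left right) fun b : Bool ↦ cond b source sink) fun
      | source => ⟨.inr true, rfl⟩
      | sink => ⟨.inr false, rfl⟩
      | left v => ⟨.inl (.inl v), rfl⟩
      | right v => ⟨.inl (.inr v), rfl⟩

/-- A topological numbering of the vertices. -/
def rank : {h : ℕ} → DoublingVertex h → ℕ
  | _, source => 0
  | h, sink => 3 ^ (h + 1)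
  | _, left v => rank v + 1
  | h + 1, right v => rank v + 3 ^ (h + 1) + 2

/-- The source side of a cut separating the two vertices of every innermost copy of `G_0`. It is not
closed under predecessors: the edges between consecutive copies cross it backwards. -/
def sourceSide : {h : ℕ} → Set (DoublingVertex h)
  | _, source => True
  | _, sink => False
  | _, left v => sourceSide v
  | _, right v => sourceSide v

end DoublingVertex

namespace DoublingEdge

open DoublingVertex (source sink rank sourceSide)

variable {h : ℕ}

/-- `G_(h+1)` has five edges besides those of the two copies of `G_h`. -/
def equivSum : DoublingEdge (h + 1) ≃ (DoublingEdge h ⊕ DoublingEdge h) ⊕ Fin 5 where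
  toFun
    | left e => .inl (.inl e)
    | right e => .inl (.inr e)
    | central => .inr 0
    | sourceLeft => .inr 1
    | sourceRight => .inr 2
    | leftSink => .inr 3
    | rightSink => .inr 4
  invFun
    | .inl (.inl e) => left e
    | .inl (.inr e) => right e
    | .inr 0 => central
    | .inr 1 => sourceLeft
    | .inr 2 => sourceRight
    | .inr 3 => leftSink
    | .inr 4 => rightSink
  left_inv := by rintro ⟨⟩ <;> rfl
  right_inv := by
    rintro ((e | e) | i)
    · rfl
    · rfl
    · fin_cases i <;> rfl

instance instFintype : ∀ h, Fintype (DoublingEdge h)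
  | 0 => ⟨{heavy, light}, by rintro ⟨⟩ <;> simp⟩
  | h + 1 =>
    letI := instFintype h
    Fintype.ofEquiv _ equivSum.symm

theorem card_add_five (h : ℕ) : Fintype.card (DoublingEdge h) + 5 = 7 * 2 ^ h := by
  induction h with
  | zero => rfl
  | succ h ih =>
    rw [Fintype.card_congr equivSum, Fintype.card_sum, Fintype.card_sum, Fintype.card_fin, pow_succ]
    omega

/-- The tail of an edge of `G_h`. -/
def src : {h : ℕ} → DoublingEdge h → DoublingVertex h
  | _, heavy => source
  | _, light => source
  | _, left e => .left (src e)
  | _, right e => .right (src e)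
  | _, central => .left sink
  | _, sourceLeft => source
  | _, sourceRight => source
  | _, leftSink => .left sink
  | _, rightSink => .right sink

/-- The head of an edge of `G_h`. -/
def tgt : {h : ℕ} → DoublingEdge h → DoublingVertex h
  | _, heavy => sink
  | _, light => sink
  | _, left e => .left (tgt e)
  | _, right e => .right (tgt e)
  | _, central => .right source
  | _, sourceLeft => .left source
  | _, sourceRight => .right source
  | _, leftSink => sink
  | _, rightSink => sink

/-- The flow on `G_h` whose backbone carries `B`, with the same `B` in all copies of smaller graphs.
The flow `X_ℓ` of the theorem is `flow (2 ^ (ℓ + 1))` on `G_ℓ`. -/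
def flow (B : ℕ) : {h : ℕ} → DoublingEdge h → ℕ
  | _, heavy => B + 1
  | _, light => 1
  | _, left e => flow B e
  | _, right e => flow B e
  | _, central => B
  | h + 1, sourceLeft => B + 2 ^ (h + 1)
  | h + 1, sourceRight => 2 ^ (h + 1)
  | h + 1, leftSink => 2 ^ (h + 1)
  | h + 1, rightSink => B + 2 ^ (h + 1)

/-- The path of `G_(h+1)` that follows `L` in both copies of `G_h`. -/
def throughBoth (L : List (DoublingEdge h)) : List (DoublingEdge (h + 1)) :=
  sourceLeft :: (L.map left ++ central :: (L.map right ++ [rightSink]))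

/-- The path of `G_(h+1)` that follows `L` in the left copy of `G_h` and avoids the right one. -/
def throughLeft (L : List (DoublingEdge h)) : List (DoublingEdge (h + 1)) :=
  sourceLeft :: (L.map left ++ [leftSink])

/-- The path of `G_(h+1)` that follows `L` in the right copy of `G_h` and avoids the left one. -/
def throughRight (L : List (DoublingEdge h)) : List (DoublingEdge (h + 1)) :=
  sourceRight :: (L.map right ++ [rightSink])

/-- The path through all copies of `G_0` that uses only heavy edges. -/
def backbone : (h : ℕ) → List (DoublingEdge h)
  | 0 => [heavy]
  | h + 1 => throughBoth (backbone h)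

/-- The short decomposition of `flow (2 ^ (h + 1))` on `G_h`. -/
def decomposition : (h : ℕ) → List (List (DoublingEdge h) × ℕ)
  | 0 => [([heavy], 3), ([light], 1)]
  | h + 1 => (throughLeft (backbone h), 2 ^ (h + 1)) :: (throughRight (backbone h), 2 ^ (h + 1)) ::
      (decomposition h).map (Prod.map throughBoth id)

theorem rank_src_lt_rank_tgt : ∀ {h : ℕ} (e : DoublingEdge h), rank e.src < rank e.tgt
  | _, heavy => by simp [src, tgt, rank]
  | _, light => by simp [src, tgt, rank]
  | _, left e => Nat.add_lt_add_right (rank_src_lt_rank_tgt e) 1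
  | _ + 1, right e => Nat.add_lt_add_right (Nat.add_lt_add_right (rank_src_lt_rank_tgt e) _) _
  | _, central => by simp [src, tgt, rank]
  | _, sourceLeft => by simp [src, tgt, rank]
  | _, sourceRight => by simp [src, tgt, rank]
  | h + 1, leftSink => by
    simp only [src, tgt, rank, pow_succ 3 (h + 1)]
    have := Nat.one_le_pow h 3 (by simp)
    omega
  | h + 1, rightSink => by
    simp only [src, tgt, rank, pow_succ 3 (h + 1)]
    have := Nat.one_le_pow h 3 (by simp)
    omega

theorem isDAG (h : ℕ) : IsDAG (src (h := h)) tgt :=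
  isDAG_of_rank_lt rank_src_lt_rank_tgt

theorem tgt_ne_source (e : DoublingEdge h) : e.tgt ≠ source := by
  cases e <;> simp [tgt]

theorem src_ne_sink (e : DoublingEdge h) : e.src ≠ sink := by
  cases e <;> simp [src]

section Walks

variable {L : List (DoublingEdge h)} {a b : DoublingVertex h}

theorem isWalk_map_left (hL : IsWalk src tgt a b L) :
    IsWalk src tgt a.left b.left (L.map left) :=
  hL.map (fun _ ↦ rfl) fun _ ↦ rfl

theorem isWalk_map_right (hL : IsWalk src tgt a b L) :
    IsWalk src tgt a.right b.right (L.map right) :=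
  hL.map (fun _ ↦ rfl) fun _ ↦ rfl

theorem isWalk_throughLeft (hL : IsWalk src tgt source sink L) :
    IsWalk src tgt source sink (throughLeft L) :=
  ⟨rfl, (isWalk_map_left hL).append ⟨rfl, rfl⟩⟩

theorem isWalk_throughRight (hL : IsWalk src tgt source sink L) :
    IsWalk src tgt source sink (throughRight L) :=
  ⟨rfl, (isWalk_map_right hL).append ⟨rfl, rfl⟩⟩

theorem isWalk_throughBoth (hL : IsWalk src tgt source sink L) :
    IsWalk src tgt source sink (throughBoth L) :=
  ⟨rfl, (isWalk_map_left hL).append ⟨rfl, (isWalk_map_right hL).append ⟨rfl, rfl⟩⟩⟩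

theorem isWalk_backbone : ∀ h, IsWalk src tgt source sink (backbone h)
  | 0 => ⟨rfl, rfl⟩
  | h + 1 => isWalk_throughBoth (isWalk_backbone h)

theorem isWalk_of_mem_decomposition :
    ∀ h, ∀ p ∈ decomposition h, IsWalk src tgt source sink p.1
  | 0 => by simp [decomposition, IsWalk, src, tgt]
  | h + 1 => by
    simp only [decomposition, List.forall_mem_cons, List.forall_mem_map]
    exact ⟨isWalk_throughLeft (isWalk_backbone h), isWalk_throughRight (isWalk_backbone h),
      fun p hp ↦ isWalk_throughBoth (isWalk_of_mem_decomposition h p hp)⟩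

theorem isPath_of_isWalk (hL : IsWalk src tgt source sink L) : IsPath src tgt source sink L := by
  refine ⟨?_, hL⟩
  rintro rfl
  cases hL

end Walks

theorem length_decomposition (h : ℕ) : (decomposition h).length = 2 * h + 2 := by
  induction h with
  | zero => rfl
  | succ h ih => simp only [decomposition, List.length_cons, List.length_map, ih]; ring

theorem sum_weights_decomposition (h : ℕ) :
    ((decomposition h).map Prod.snd).sum = 2 ^ (h + 1) + 2 ^ (h + 1) := by
  induction h with
  | zero => rfl
  | succ h ih =>
    have weights_lift : (Prod.snd ∘ Prod.map throughBoth id : List (DoublingEdge h) × ℕ → ℕ) =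
      Prod.snd := rfl
    simp only [decomposition, List.map_cons, List.sum_cons, List.map_map, weights_lift, ih]
    ring

section Membership

variable {L : List (DoublingEdge h)} {e : DoublingEdge h}

theorem left_mem_throughBoth : left e ∈ throughBoth L ↔ e ∈ L := by simp [throughBoth]

theorem right_mem_throughBoth : right e ∈ throughBoth L ↔ e ∈ L := by simp [throughBoth]

theorem left_mem_throughLeft : left e ∈ throughLeft L ↔ e ∈ L := by simp [throughLeft]

theorem right_notMem_throughLeft : right e ∉ throughLeft L := by simp [throughLeft]

theorem left_notMem_throughRight : left e ∉ throughRight L := by simp [throughRight]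

theorem right_mem_throughRight : right e ∈ throughRight L ↔ e ∈ L := by simp [throughRight]

end Membership

theorem flow_add (B C : ℕ) : ∀ {h : ℕ} (e : DoublingEdge h),
    flow (B + C) e = flow B e + pathFlow (backbone h) C e
  | _, heavy => by simp [flow, pathFlow, backbone, add_right_comm]
  | _, light => by simp [flow, pathFlow, backbone]
  | _, left e => by
    simpa only [flow, pathFlow, backbone, left_mem_throughBoth] using flow_add B C e
  | _, right e => by
    simpa only [flow, pathFlow, backbone, right_mem_throughBoth] using flow_add B C e
  | _ + 1, central => by simp [flow, pathFlow, backbone, throughBoth]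
  | _ + 1, sourceLeft => by simp [flow, pathFlow, backbone, throughBoth, add_right_comm]
  | _ + 1, sourceRight => by simp [flow, pathFlow, backbone, throughBoth]
  | _ + 1, leftSink => by simp [flow, pathFlow, backbone, throughBoth]
  | _ + 1, rightSink => by simp [flow, pathFlow, backbone, throughBoth, add_right_comm]

theorem flow_eq_flow_zero_add (B h : ℕ) : flow B (h := h) = flow 0 + pathFlow (backbone h) B :=
  funext fun e ↦ by rw [Pi.add_apply, ← flow_add, zero_add]

section Superposition

variable {D : List (List (DoublingEdge h) × ℕ)} {e' : DoublingEdge (h + 1)}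

theorem superposition_map_throughBoth {e : DoublingEdge h}
    (he : ∀ L, e' ∈ throughBoth L ↔ e ∈ L) :
    superposition (D.map (Prod.map throughBoth id)) e' = superposition D e := by
  simp [superposition, pathFlow, Function.comp_def, he]

theorem superposition_map_throughBoth_of_mem (he : ∀ L, e' ∈ throughBoth L) :
    superposition (D.map (Prod.map throughBoth id)) e' = (D.map Prod.snd).sum := by
  simp [superposition, pathFlow, Function.comp_def, he]

theorem superposition_map_throughBoth_of_notMem (he : ∀ L, e' ∉ throughBoth L) :
    superposition (D.map (Prod.map throughBoth id)) e' = 0 := by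
  simp [superposition, pathFlow, Function.comp_def, he]

end Superposition

theorem superposition_decomposition_succ (e : DoublingEdge (h + 1)) :
    superposition (decomposition (h + 1)) e =
      pathFlow (throughLeft (backbone h)) (2 ^ (h + 1)) e +
        pathFlow (throughRight (backbone h)) (2 ^ (h + 1)) e +
        superposition ((decomposition h).map (Prod.map throughBoth id)) e := by
  rw [decomposition, superposition_cons, superposition_cons, ← add_assoc]
  rfl

theorem flow_two_pow_succ (e : DoublingEdge h) :
    flow (2 ^ (h + 2)) e = pathFlow (backbone h) (2 ^ (h + 1)) e + flow (2 ^ (h + 1)) e := by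
  rw [pow_succ, mul_two, flow_add, add_comm]

theorem flow_eq_superposition : ∀ {h : ℕ} (e : DoublingEdge h),
    flow (2 ^ (h + 1)) e = superposition (decomposition h) e
  | _, heavy => by simp [flow, superposition, pathFlow, decomposition]
  | _, light => by simp [flow, superposition, pathFlow, decomposition]
  | _ + 1, left e => by
    rw [superposition_decomposition_succ,
      superposition_map_throughBoth fun _ ↦ left_mem_throughBoth, ← flow_eq_superposition e, flow,
      flow_two_pow_succ]
    simp only [pathFlow, left_mem_throughLeft, left_notMem_throughRight, if_false, add_zero]
  | _ + 1, right e => by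
    rw [superposition_decomposition_succ,
      superposition_map_throughBoth fun _ ↦ right_mem_throughBoth, ← flow_eq_superposition e, flow,
      flow_two_pow_succ]
    simp only [pathFlow, right_notMem_throughLeft, right_mem_throughRight, if_false, zero_add]
  | _ + 1, central => by
    rw [superposition_decomposition_succ,
      superposition_map_throughBoth_of_mem (by simp [throughBoth]), sum_weights_decomposition]
    simp [flow, pathFlow, throughLeft, throughRight, pow_succ, mul_two]
  | _ + 1, sourceLeft => by
    rw [superposition_decomposition_succ,
      superposition_map_throughBoth_of_mem (by simp [throughBoth]), sum_weights_decomposition]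
    simp +arith [flow, pathFlow, throughLeft, throughRight, pow_succ]
  | _ + 1, rightSink => by
    rw [superposition_decomposition_succ,
      superposition_map_throughBoth_of_mem (by simp [throughBoth]), sum_weights_decomposition]
    simp +arith [flow, pathFlow, throughLeft, throughRight, pow_succ]
  | _ + 1, sourceRight => by
    rw [superposition_decomposition_succ,
      superposition_map_throughBoth_of_notMem (by simp [throughBoth])]
    simp [flow, pathFlow, throughLeft, throughRight]
  | _ + 1, leftSink => by
    rw [superposition_decomposition_succ,
      superposition_map_throughBoth_of_notMem (by simp [throughBoth])]
    simp [flow, pathFlow, throughLeft, throughRight]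

theorem isFlowOfValue_flow (h : ℕ) :
    IsFlowOfValue src tgt source sink (flow (h := h) (2 ^ (h + 1)))
      (2 ^ (h + 1) + 2 ^ (h + 1)) := by
  rw [funext flow_eq_superposition, ← sum_weights_decomposition]
  exact isFlowOfValue_superposition (isDAG h) (isWalk_of_mem_decomposition h)

theorem isFlowOfValue_flow_zero (h : ℕ) :
    IsFlowOfValue src tgt source sink (flow (h := h) 0) (2 ^ (h + 1)) :=
  (flow_eq_flow_zero_add _ h ▸ isFlowOfValue_flow h).of_add
    ((isWalk_backbone h).isFlowOfValue (isDAG h) _)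

theorem flow_zero_lt_of_notMem_backbone : ∀ {h : ℕ} (e : DoublingEdge h), e ∉ backbone h →
    flow 0 e < 2 ^ (h + 1)
  | _, heavy, he => absurd (List.mem_singleton_self heavy) he
  | _, light, _ => one_lt_two
  | h + 1, left e, he =>
    (flow_zero_lt_of_notMem_backbone e (mt left_mem_throughBoth.2 he)).trans (by simp [pow_succ])
  | h + 1, right e, he =>
    (flow_zero_lt_of_notMem_backbone e (mt right_mem_throughBoth.2 he)).trans (by simp [pow_succ])
  | _ + 1, central, _ => by simp [flow]
  | _ + 1, sourceLeft, _ => by simp [flow, pow_succ]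
  | _ + 1, sourceRight, _ => by simp [flow, pow_succ]
  | _ + 1, leftSink, _ => by simp [flow, pow_succ]
  | _ + 1, rightSink, _ => by simp [flow, pow_succ]

theorem flow_zero_le_one_of_leaves_sourceSide : ∀ {h : ℕ} (e : DoublingEdge h),
    e.src ∈ sourceSide → e.tgt ∉ sourceSide → flow 0 e ≤ 1
  | _, heavy, _, _ => le_rfl
  | _, light, _, _ => le_rfl
  | _, left e, hsrc, htgt => flow_zero_le_one_of_leaves_sourceSide e hsrc htgt
  | _, right e, hsrc, htgt => flow_zero_le_one_of_leaves_sourceSide e hsrc htgt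
  | _, central, hsrc, _ => absurd hsrc id
  | _, sourceLeft, _, htgt => absurd trivial htgt
  | _, sourceRight, _, htgt => absurd trivial htgt
  | _, leftSink, hsrc, _ => absurd hsrc id
  | _, rightSink, hsrc, _ => absurd hsrc id

theorem exists_mem_backbone_flow_zero_eq_zero (hh : 1 ≤ h) : ∃ e ∈ backbone h, flow 0 e = 0 := by
  obtain ⟨h, rfl⟩ := Nat.exists_eq_add_of_le' hh
  exact ⟨central, by simp [backbone, throughBoth], rfl⟩

theorem isGreedyGap_flow (hh : 1 ≤ h) :
    IsGreedyGap src tgt source sink (flow (h := h) (2 ^ (h + 1))) (2 ^ (h + 1)) (2 * h + 2) where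
  isDAG := isDAG h
  tgt_ne := tgt_ne_source
  src_ne := src_ne_sink
  isFlowN := (isFlowOfValue_flow h).isFlowN
  ne_zero := (isFlowOfValue_flow h).ne_zero nofun (by positivity)
  greedy seq P w h0 hrun := by
    obtain ⟨N, hN⟩ := Nat.exists_eq_succ_of_ne_zero (Nat.two_pow_pos (h + 1)).ne'
    have hvalue := isFlowOfValue_flow_zero h
    rw [flow_eq_flow_zero_add] at h0
    rw [hN] at hvalue ⊢
    exact hrun.length_eq_of_backbone (isDAG h) src_ne_sink (isPath_of_isWalk (isWalk_backbone h))
      flow_zero_lt_of_notMem_backbone (exists_mem_backbone_flow_zero_eq_zero hh) h0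
      (S := sourceSide) trivial id flow_zero_le_one_of_leaves_sourceSide hvalue
  decomposition := by
    rw [← length_decomposition]
    exact ⟨fun i ↦ ((decomposition h).get i).1, fun i ↦ ((decomposition h).get i).2,
      fun i ↦ isPath_of_isWalk (isWalk_of_mem_decomposition h _ (List.get_mem _ i)),
      fun e ↦ by rw [flow_eq_superposition, superposition_eq_sum]⟩

end DoublingEdge

/-- A family of DAGs `G_ℓ` with `7·2^ℓ − 5` edges on which greedy-weight uses exactly
`1 + 2^(ℓ+1)` paths while a flow decomposition of size `2ℓ + 2` exists; hence
greedy-weight has worst-case approximation ratio `Ω(m / log m)`. -/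
theorem stmt_11 :
    ∀ ℓ : ℕ, 1 ≤ ℓ →
    ∃ (n : ℕ) (src tgt : Fin (7 * 2 ^ ℓ - 5) → Fin n) (s t : Fin n)
      (X : Fin (7 * 2 ^ ℓ - 5) → ℕ),
      IsDAG src tgt ∧ (∀ e, tgt e ≠ s) ∧ (∀ e, src e ≠ t) ∧
      IsFlowN src tgt s t X ∧ X ≠ 0 ∧
      (∀ (seq : ℕ → Fin (7 * 2 ^ ℓ - 5) → ℕ) (P : ℕ → List (Fin (7 * 2 ^ ℓ - 5)))
         (w : ℕ → ℕ), seq 0 = X → GreedyRun src tgt s t seq P w →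
           seq (1 + 2 ^ (ℓ + 1)) = 0 ∧ seq (2 ^ (ℓ + 1)) ≠ 0) ∧
      (∃ (P : Fin (2 * ℓ + 2) → List (Fin (7 * 2 ^ ℓ - 5)))
         (w : Fin (2 * ℓ + 2) → ℕ),
        (∀ i, IsPath src tgt s t (P i)) ∧
        ∀ e, X e = ∑ i, if e ∈ P i then w i else 0) := by
  intro ℓ hℓ
  have card_edges : Fintype.card (DoublingEdge ℓ) = 7 * 2 ^ ℓ - 5 :=
    Nat.eq_sub_of_add_eq (DoublingEdge.card_add_five ℓ)
  obtain ⟨n, ⟨φ⟩⟩ := Finite.exists_equiv_fin (DoublingVertex ℓ)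
  have gap := (DoublingEdge.isGreedyGap_flow hℓ).reindex φ
    (Fintype.equivFinOfCardEq card_edges).symm
  exact ⟨n, _, _, _, _, _, gap.isDAG, gap.tgt_ne, gap.src_ne, gap.isFlowN, gap.ne_zero, gap.greedy,
    gap.decomposition⟩
end

section
/- There exists a DAG G, a flow X on G, and a minimum flow decomposition of (G,X) into 8 paths P_1,...,P_8 with positive integer weights, such that the induced linear system L(P_1,...,P_8)·w = X admits two distinct positive integer solutions; hence the edge-path incidence matrix of a minimum flow decomposition need not have full column rank (disproving the conjecture of Kloster et al.). -/
open Finset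

/-!
Fix the paths `P_j` and give them weights `N ^ j`. The point `(N ^ j)_j` runs over the moment curve,
so for large `N` it avoids every proper subspace from a given finite list. Only finitely many spaces
are spanned by `0/1` vectors; hence, if the resulting flow also decomposes over paths
`Q_1, …, Q_k`, the column space of `L(Q)` contains that of `L(P)`.

The eight paths of the counterexample satisfy a single linear relation,
`2 A_0 - 2 B_0 + ∑ A_i - ∑ B_i = 0`, so `L(P)` has rank `7` and for `k < 8` the two column spaces
agree. A path in the column space of `L(P)` is one of the eight, so the `Q_i` only reuse paths
`P_j`, and their weights give a nonnegative solution of `L(P) w = X`. The integer solutions lie on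
one line with step `(2, -2, 1, 1, 1, -1, -1, -1)`. If `N` is odd, then the weights of `A_0` and
`B_0` stay odd along it, so no nonnegative solution has a zero entry and all eight paths are
needed. One step along the line yields the second positive solution.

Powers of one large odd number replace the explicit weights of the paper here.
-/

section Walks

variable {V E : Type} {src tgt : E → V}

theorem isWalk_append {a b : V} {L₁ L₂ : List E} :
    IsWalk src tgt a b (L₁ ++ L₂) ↔ ∃ c, IsWalk src tgt a c L₁ ∧ IsWalk src tgt c b L₂ := by
  induction L₁ generalizing a with
  | nil => simp [IsWalk]
  | cons e L₁ ih => simp [IsWalk, ih, and_assoc]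

theorem IsWalk.lt_of_rank {α : Type*} [Preorder α] {rank : V → α}
    (h_rank : ∀ e, rank (src e) < rank (tgt e)) {a b : V} {L : List E}
    (hL : IsWalk src tgt a b L) (h_ne : L ≠ []) : rank a < rank b := by
  induction L generalizing a with
  | nil => exact absurd rfl h_ne
  | cons e L ih =>
    obtain ⟨rfl, hL⟩ := hL
    rcases eq_or_ne L [] with rfl | h
    · exact (h_rank e).trans_eq (congrArg rank hL)
    · exact (h_rank e).trans (ih hL h)

theorem isDAG_of_rank {α : Type*} [Preorder α] (rank : V → α)
    (h_rank : ∀ e, rank (src e) < rank (tgt e)) : IsDAG src tgt :=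
  fun _ _ h_ne hL => (hL.lt_of_rank h_rank h_ne).false

theorem IsDAG.nodup_of_isWalk (hG : IsDAG src tgt) {a b : V} {L : List E}
    (hL : IsWalk src tgt a b L) : L.Nodup := by
  induction L generalizing a with
  | nil => exact List.nodup_nil
  | cons e L ih =>
    refine List.nodup_cons.2 ⟨fun he => ?_, ih hL.2⟩
    obtain ⟨L₁, L₂, rfl⟩ := List.append_of_mem he
    obtain ⟨c, hL₁, rfl, -⟩ := isWalk_append.1 hL.2
    exact hG (src e) (e :: L₁) (List.cons_ne_nil _ _) ⟨rfl, hL₁⟩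

theorem IsWalk.sum_map_tgt_add {M : Type*} [AddCommMonoid M] (f : V → M) {a b : V} {L : List E}
    (hL : IsWalk src tgt a b L) :
    (L.map fun e => f (tgt e)).sum + f a = (L.map fun e => f (src e)).sum + f b := by
  induction L generalizing a with
  | nil => exact congrArg (0 + f ·) hL
  | cons e L ih =>
    obtain ⟨rfl, hL⟩ := hL
    simp only [List.map_cons, List.sum_cons, add_assoc, ← ih hL]
    abel

variable [Fintype E] [DecidableEq E]

theorem IsDAG.sum_tgt_add_of_isWalk (hG : IsDAG src tgt) {M : Type*} [AddCommMonoid M]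
    (f : V → M) {a b : V} {L : List E} (hL : IsWalk src tgt a b L) :
    (∑ e, if e ∈ L then f (tgt e) else 0) + f a =
      (∑ e, if e ∈ L then f (src e) else 0) + f b := by
  have h_sum (g : E → M) : (∑ e, if e ∈ L then g e else 0) = (L.map g).sum := by
    rw [← List.sum_toFinset g (hG.nodup_of_isWalk hL), ← Finset.sum_filter]
    congr 1
    ext e
    simp
  rw [h_sum, h_sum, hL.sum_map_tgt_add]

variable [DecidableEq V]

theorem IsDAG.isFlowN_sum_paths (hG : IsDAG src tgt) {s t : V} {ι : Type*} [Fintype ι]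
    {P : ι → List E} (hP : ∀ i, IsPath src tgt s t (P i)) (w : ι → ℕ) :
    IsFlowN src tgt s t fun e => ∑ i, if e ∈ P i then w i else 0 := by
  intro v hs ht
  have h_swap (end_ : E → V) :
      (∑ e, if end_ e = v then ∑ i, if e ∈ P i then w i else 0 else 0) =
        ∑ i, ∑ e, if e ∈ P i then (if end_ e = v then w i else 0) else 0 := by
    rw [Finset.sum_comm]
    refine Finset.sum_congr rfl fun e _ => ?_
    split_ifs <;> simp
  rw [h_swap, h_swap]
  refine Finset.sum_congr rfl fun i _ => ?_
  simpa [hs.symm, ht.symm] using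
    hG.sum_tgt_add_of_isWalk (fun x => if x = v then w i else 0) (hP i).2

theorem IsDAG.sum_source_edges_eq_one (hG : IsDAG src tgt) {s t : V} (hs : ∀ e, tgt e ≠ s)
    {L : List E} (hL : IsPath src tgt s t L) {R : Type*} [AddCommMonoidWithOne R] :
    ∑ e with src e = s, (if e ∈ L then (1 : R) else 0) = 1 := by
  have h_ne : t ≠ s := by
    rintro rfl
    exact hG t L hL.1 hL.2
  have h_bal := hG.sum_tgt_add_of_isWalk (fun x => if x = s then (1 : R) else 0) hL.2
  simp only [hs, h_ne, if_true, if_false, ite_self, Finset.sum_const_zero, zero_add,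
    add_zero] at h_bal
  simp_rw [Finset.sum_filter, ← ite_and, and_comm] at h_bal ⊢
  exact h_bal.symm

end Walks

section Incidence

open Matrix

variable {E ι : Type*} [DecidableEq E]

/-- The edge-path incidence matrix `L(P)` of a family of paths: `L(P) *ᵥ w` is the superposition
of the paths with weights `w`. -/
def incidence (R : Type*) [Zero R] [One R] (P : ι → List E) : Matrix E ι R :=
  of fun e i => if e ∈ P i then 1 else 0

theorem incidence_mulVec_apply {R : Type*} [NonAssocSemiring R] [Fintype ι] (P : ι → List E)
    (w : ι → R) (e : E) : (incidence R P *ᵥ w) e = ∑ i, if e ∈ P i then w i else 0 := by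
  simp [incidence, mulVec, dotProduct]

theorem incidence_mulVec_natCast (R : Type*) [NonAssocSemiring R] [Fintype ι] (P : ι → List E)
    (w : ι → ℕ) :
    incidence R P *ᵥ (fun i => (w i : R)) = fun e => ((incidence ℕ P *ᵥ w) e : R) := by
  ext e
  simp only [incidence_mulVec_apply]
  push_cast
  rfl

theorem incidence_eq_mul_submatrix_one {κ : Type*} [Fintype ι] [DecidableEq ι] (R : Type*)
    [NonAssocSemiring R] {P : ι → List E} {Q : κ → List E} {g : κ → ι}
    (hg : ∀ i e, e ∈ Q i ↔ e ∈ P (g i)) :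
    incidence R Q = incidence R P * (1 : Matrix ι ι R).submatrix id g := by
  rw [← Equiv.coe_refl, mul_submatrix_one]
  ext e i
  simp [incidence, hg]

end Incidence

section MomentCurve

variable {K : Type*} [Field K] {n : ℕ}

theorem finite_setOf_moment_mem {W : Submodule K (Fin n → K)} (hW : W ≠ ⊤) :
    {x : K | (fun j : Fin n => x ^ (j : ℕ)) ∈ W}.Finite := by
  obtain ⟨f, hf, hWf⟩ := W.exists_le_ker_of_lt_top hW.lt_top
  classical
  let p : Polynomial K := Polynomial.ofFn n fun j => f fun i => if j = i then 1 else 0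
  have hp : p ≠ 0 := by
    intro h
    have h_coeff := congrFun (Polynomial.injective_ofFn n (h.trans (map_zero _).symm))
    refine hf (LinearMap.ext fun v => ?_)
    simp [LinearMap.pi_apply_eq_sum_univ f v, h_coeff]
  refine (Set.not_infinite.1 (mt p.eq_zero_of_infinite_isRoot hp)).subset fun x hx => ?_
  have h_eval : p.eval x = f fun j => x ^ (j : ℕ) := by
    simp_rw [p, Polynomial.ofFn_eq_sum_monomial, Polynomial.eval_finsetSum,
      Polynomial.eval_monomial, LinearMap.pi_apply_eq_sum_univ f fun j => x ^ (j : ℕ),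
      smul_eq_mul, mul_comm]
  exact h_eval.trans (hWf hx)

theorem eventually_range_le_of_moment_mem [CharZero K] {M : Type*} [AddCommGroup M] [Module K M]
    (φ : (Fin n → K) →ₗ[K] M) {𝒲 : Set (Submodule K M)} (h𝒲 : 𝒲.Finite) :
    ∀ᶠ N : ℕ in Filter.atTop, ∀ W ∈ 𝒲,
      φ (fun j => (N : K) ^ (j : ℕ)) ∈ W → LinearMap.range φ ≤ W := by
  refine (Filter.eventually_all_finite h𝒲).2 fun W _ => ?_
  by_cases hφ : LinearMap.range φ ≤ W
  · exact .of_forall fun _ _ => hφ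
  have hW : W.comap φ ≠ ⊤ := fun h => hφ (LinearMap.range_le_iff_comap.2 h)
  have h_fin := (finite_setOf_moment_mem hW).preimage (f := ((↑) : ℕ → K)) Nat.cast_injective.injOn
  rw [← Nat.cofinite_eq_atTop]
  filter_upwards [h_fin.compl_mem_cofinite] with N hN h using absurd h hN

end MomentCurve

section Generic

open Matrix

variable {E : Type*} [Finite E] [DecidableEq E]

theorem eventually_range_incidence_le {n : ℕ} (P : Fin n → List E) :
    ∀ᶠ N : ℕ in Filter.atTop, ∀ (k : ℕ) (Q : Fin k → List E) (u : Fin k → ℕ),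
      incidence ℕ P *ᵥ (fun j => N ^ (j : ℕ)) = incidence ℕ Q *ᵥ u →
        LinearMap.range (incidence ℚ P).mulVecLin ≤ LinearMap.range (incidence ℚ Q).mulVecLin := by
  have h_fin : (Set.range fun S : Set (Finset E) =>
      Submodule.span ℚ ((fun s e => if e ∈ s then (1 : ℚ) else 0) '' S)).Finite :=
    Set.finite_range _
  filter_upwards [eventually_range_le_of_moment_mem (incidence ℚ P).mulVecLin h_fin]
    with N hN k Q u hQ
  have h_span : Submodule.span ℚ ((fun s e => if e ∈ s then (1 : ℚ) else 0) ''
      Set.range fun i => (Q i).toFinset) = LinearMap.range (incidence ℚ Q).mulVecLin := by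
    rw [range_mulVecLin, ← Set.range_comp]
    congr 2
    ext i e
    simp [incidence]
  rw [← h_span]
  refine hN _ ⟨_, rfl⟩ ?_
  rw [h_span]
  refine ⟨fun i => u i, ?_⟩
  simp_rw [mulVecLin_apply, ← Nat.cast_pow, incidence_mulVec_natCast, hQ]

end Generic

section ZeroOne

/-- A vector with all entries in `{0, 1}`. -/
def IsZeroOne {ι R : Type*} [Zero R] [One R] (x : ι → R) : Prop :=
  ∀ i, x i = 0 ∨ x i = 1

theorem IsZeroOne.exists_eq_single_of_sum_eq_one {ι R : Type*} [Fintype ι] [DecidableEq ι]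
    [Ring R] [PartialOrder R] [IsOrderedRing R] [Nontrivial R] {x : ι → R}
    (h01 : IsZeroOne x) (h_sum : ∑ i, x i = 1) : ∃ i, x = Pi.single i 1 := by
  obtain ⟨i, -, hi⟩ := Finset.exists_ne_zero_of_sum_ne_zero (h_sum.trans_ne one_ne_zero)
  replace hi : x i = 1 := (h01 i).resolve_left hi
  have h_nonneg (j : ι) : 0 ≤ x j := by rcases h01 j with h | h <;> simp [h]
  have h_rest : ∑ j ∈ univ.erase i, x j = 0 := by
    rw [← Finset.add_sum_erase _ _ (mem_univ i), hi] at h_sum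
    exact add_eq_left.1 h_sum
  rw [Finset.sum_eq_zero_iff_of_nonneg fun j _ => h_nonneg j] at h_rest
  refine ⟨i, funext fun j => ?_⟩
  rcases eq_or_ne j i with rfl | h
  · simp [hi]
  · simp [h, h_rest j (by simp [h])]

theorem exists_isZeroOne_add_and_sub {ι κ R : Type*} [Nonempty ι] [Nonempty κ] [CommRing R]
    [NoZeroDivisors R] [NeZero (2 : R)] {a : ι → R} {b : κ → R}
    (h01 : ∀ i, IsZeroOne fun j => a i + b j) :
    ∃ z, IsZeroOne (fun i => a i + z) ∧ IsZeroOne fun j => b j - z := by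
  obtain ⟨i₀⟩ := ‹Nonempty ι›
  obtain ⟨j₀⟩ := ‹Nonempty κ›
  by_cases ha : ∀ i, a i = a i₀
  · exact ⟨-a i₀, fun i => by simp [ha i], fun j => by simpa [add_comm] using h01 i₀ j⟩
  · push Not at ha
    obtain ⟨i₁, h_ne⟩ := ha
    -- `a i₀ + b j` and `a i₁ + b j` are `0` and `1` in some order, whatever `j` is.
    have h_sum (j : κ) : a i₀ + a i₁ + 2 * b j = 1 := by
      have h₀ : a i₀ + b j = 0 ∨ a i₀ + b j = 1 := h01 i₀ j
      have h₁ : a i₁ + b j = 0 ∨ a i₁ + b j = 1 := h01 i₁ j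
      grind
    have hb (j : κ) : b j = b j₀ :=
      mul_left_cancel₀ (two_ne_zero (α := R)) (by linear_combination h_sum j - h_sum j₀)
    exact ⟨b j₀, fun i => h01 i j₀, fun j => by simp [hb j]⟩

end ZeroOne

section Concrete

open Matrix

/-- The tail of each edge of the counterexample graph: the vertices are `0, …, 6`, and all edges
leaving `i` are parallel and lead to `i + 1`. -/
def layeredSrc : Fin 21 → Fin 7 :=
  ![0, 0, 0, 0, 1, 1, 1, 1, 2, 2, 2, 2, 3, 3, 3, 4, 4, 4, 5, 5, 5]

/-- The head of each edge of the counterexample graph. No edge leaves vertex `6`, so the addition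
in `Fin 7` never wraps around. -/
def layeredTgt (e : Fin 21) : Fin 7 := layeredSrc e + 1

/-- The eight paths of the counterexample, in the order `A_0, B_0, A_1, A_2, A_3, B_1, B_2, B_3`.
The first three layers pair `A_0` with `B_0` and match `A_1, A_2, A_3` with `B_1, B_2, B_3` in three
ways, so that all nine pairs `A_i, B_j` share an edge. -/
def layeredPath : Fin 8 → List (Fin 21) :=
  ![[0, 4, 8, 12, 15, 18],
    [0, 4, 8, 13, 16, 19],
    [1, 5, 9, 14, 16, 19],
    [2, 6, 10, 13, 17, 19],
    [3, 7, 11, 13, 16, 20],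
    [1, 7, 10, 14, 15, 18],
    [2, 5, 11, 12, 17, 18],
    [3, 6, 9, 12, 15, 20]]

theorem isDAG_layered : IsDAG layeredSrc layeredTgt :=
  isDAG_of_rank id (by decide)

theorem layeredTgt_ne_zero : ∀ e, layeredTgt e ≠ 0 := by decide

theorem isPath_layeredPath (j : Fin 8) : IsPath layeredSrc layeredTgt 0 6 (layeredPath j) := by
  fin_cases j <;> simp [IsPath, IsWalk, layeredPath, layeredSrc, layeredTgt]

/-- The coefficients of the linear relation `2 A_0 - 2 B_0 + ∑ A_i - ∑ B_i = 0` between the columns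
of the incidence matrix of `layeredPath`. -/
def pathRelation (R : Type*) [Ring R] : Fin 8 → R := ![2, -2, 1, 1, 1, -1, -1, -1]

theorem incidence_layeredPath_mulVec {R : Type*} [NonAssocSemiring R] (c : Fin 8 → R) :
    incidence R layeredPath *ᵥ c =
      ![c 0 + c 1, c 2 + c 5, c 3 + c 6, c 4 + c 7,
        c 0 + c 1, c 2 + c 6, c 3 + c 7, c 4 + c 5,
        c 0 + c 1, c 2 + c 7, c 3 + c 5, c 4 + c 6,
        c 0 + c 6 + c 7, c 1 + c 3 + c 4, c 2 + c 5,
        c 0 + c 5 + c 7, c 1 + c 2 + c 4, c 3 + c 6,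
        c 0 + c 5 + c 6, c 1 + c 2 + c 3, c 4 + c 7] := by
  funext e
  rw [incidence_mulVec_apply]
  fin_cases e <;> simp [Fin.sum_univ_succ, layeredPath, add_assoc]

theorem incidence_layeredPath_mulVec_pathRelation (R : Type*) [Ring R] :
    incidence R layeredPath *ᵥ pathRelation R = 0 := by
  rw [incidence_layeredPath_mulVec]
  funext e
  fin_cases e <;> simp [pathRelation] <;> norm_num

theorem incidence_mulVec_add_smul_pathRelation {R : Type*} [CommRing R] (c : Fin 8 → R) (z : R) :
    incidence R layeredPath *ᵥ (c + z • pathRelation R) = incidence R layeredPath *ᵥ c := by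
  rw [mulVec_add, mulVec_smul, incidence_layeredPath_mulVec_pathRelation, smul_zero, add_zero]

theorem eq_smul_pathRelation {R : Type*} [CommRing R] {c : Fin 8 → R}
    (hc : incidence R layeredPath *ᵥ c = 0) : c = c 2 • pathRelation R := by
  rw [incidence_layeredPath_mulVec] at hc
  have h1 : c 2 + c 5 = 0 := congrFun hc 1
  have h5 : c 2 + c 6 = 0 := congrFun hc 5
  have h9 : c 2 + c 7 = 0 := congrFun hc 9
  have h2 : c 3 + c 6 = 0 := congrFun hc 2
  have h3 : c 4 + c 7 = 0 := congrFun hc 3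
  have h12 : c 0 + c 6 + c 7 = 0 := congrFun hc 12
  have h0 : c 0 + c 1 = 0 := congrFun hc 0
  funext j
  fin_cases j <;> simp [pathRelation] <;> grind

theorem seven_le_rank_incidence_layeredPath : 7 ≤ (incidence ℚ layeredPath).rank := by
  have h_ker : LinearMap.ker (incidence ℚ layeredPath).mulVecLin ≤
      Submodule.span ℚ {pathRelation ℚ} := fun c hc =>
    Submodule.mem_span_singleton.2 ⟨c 2, (eq_smul_pathRelation hc).symm⟩
  have h_null : Module.finrank ℚ (LinearMap.ker (incidence ℚ layeredPath).mulVecLin) ≤ 1 :=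
    ((Submodule.finrank_mono h_ker).trans (finrank_span_le_card _)).trans_eq (by simp)
  have h_add := (incidence ℚ layeredPath).mulVecLin.finrank_range_add_finrank_ker
  rw [Module.finrank_fin_fun] at h_add
  unfold Matrix.rank
  omega

theorem exists_mulVec_eq_of_isZeroOne {c : Fin 8 → ℚ}
    (h01 : IsZeroOne (incidence ℚ layeredPath *ᵥ c)) :
    ∃ c', incidence ℚ layeredPath *ᵥ c' = incidence ℚ layeredPath *ᵥ c ∧
      ∀ j, 2 ≤ j → c' j = 0 ∨ c' j = 1 := by
  have h_sum (i : Fin 3) : IsZeroOne fun j => ![c 2, c 3, c 4] i + ![c 5, c 6, c 7] j := by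
    intro j
    rw [incidence_layeredPath_mulVec] at h01
    fin_cases i <;> fin_cases j
    exacts [h01 1, h01 5, h01 9, h01 10, h01 2, h01 6, h01 7, h01 11, h01 3]
  obtain ⟨z, hA, hB⟩ := exists_isZeroOne_add_and_sub h_sum
  have h_shift : c + z • pathRelation ℚ =
      ![c 0 + 2 * z, c 1 - 2 * z, c 2 + z, c 3 + z, c 4 + z, c 5 - z, c 6 - z, c 7 - z] := by
    funext j
    fin_cases j <;> simp [pathRelation] <;> ring
  refine ⟨c + z • pathRelation ℚ, incidence_mulVec_add_smul_pathRelation c z, fun j hj => ?_⟩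
  rw [h_shift]
  fin_cases j
  exacts [absurd hj (by decide), absurd hj (by decide), hA 0, hA 1, hA 2, hB 0, hB 1, hB 2]

theorem sum_source_edges_incidence_mulVec {R : Type*} [NonAssocSemiring R] (c : Fin 8 → R) :
    ∑ e with layeredSrc e = 0, (incidence R layeredPath *ᵥ c) e = ∑ j, c j := by
  have h_first : (univ.filter fun e => layeredSrc e = 0) = {0, 1, 2, 3} := by decide
  rw [incidence_layeredPath_mulVec, h_first, Fin.sum_univ_eight]
  suffices c 0 + c 1 + (c 2 + c 5 + (c 3 + c 6 + (c 4 + c 7))) =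
      c 0 + c 1 + c 2 + c 3 + c 4 + c 5 + c 6 + c 7 by simpa
  abel

theorem isZeroOne_of_isZeroOne_mulVec {c : Fin 8 → ℚ}
    (h01 : IsZeroOne (incidence ℚ layeredPath *ᵥ c)) (h_total : ∑ j, c j = 1)
    (hc : ∀ j, 2 ≤ j → c j = 0 ∨ c j = 1) : IsZeroOne c := by
  intro j
  rw [incidence_layeredPath_mulVec] at h01
  rw [Fin.sum_univ_eight] at h_total
  by_cases hj : 2 ≤ j
  · exact hc j hj
  -- `0 ≤ c 0 + c 1` leaves room for at most one nonzero entry among `c 2, …, c 7`, so `c 0` and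
  -- `c 1` are entries of `L(P) c` up to vanishing summands.
  have h_sum : c 0 + c 1 = 0 ∨ c 0 + c 1 = 1 := h01 0
  have h2 := hc 2 (by decide)
  have h3 := hc 3 (by decide)
  have h4 := hc 4 (by decide)
  have h5 := hc 5 (by decide)
  have h6 := hc 6 (by decide)
  have h7 := hc 7 (by decide)
  have h_A : c 0 = 0 ∨ c 0 = 1 := by
    have h67 : c 0 + c 6 + c 7 = 0 ∨ c 0 + c 6 + c 7 = 1 := h01 12
    have h57 : c 0 + c 5 + c 7 = 0 ∨ c 0 + c 5 + c 7 = 1 := h01 15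
    have h56 : c 0 + c 5 + c 6 = 0 ∨ c 0 + c 5 + c 6 = 1 := h01 18
    grind
  have h_B : c 1 = 0 ∨ c 1 = 1 := by
    have h34 : c 1 + c 3 + c 4 = 0 ∨ c 1 + c 3 + c 4 = 1 := h01 13
    have h24 : c 1 + c 2 + c 4 = 0 ∨ c 1 + c 2 + c 4 = 1 := h01 16
    have h23 : c 1 + c 2 + c 3 = 0 ∨ c 1 + c 2 + c 3 = 1 := h01 19
    grind
  obtain rfl | rfl : j = 0 ∨ j = 1 := by omega
  exacts [h_A, h_B]

theorem exists_layeredPath_mem_iff {L : List (Fin 21)} (hL : IsPath layeredSrc layeredTgt 0 6 L)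
    (h_range : (fun e => if e ∈ L then 1 else 0) ∈
      LinearMap.range (incidence ℚ layeredPath).mulVecLin) :
    ∃ j, ∀ e, e ∈ L ↔ e ∈ layeredPath j := by
  obtain ⟨c, hc⟩ := h_range
  rw [mulVecLin_apply] at hc
  have h01 : IsZeroOne (incidence ℚ layeredPath *ᵥ c) := by
    rw [hc]
    exact fun e => (ite_eq_or_eq _ _ _).symm
  obtain ⟨c', hc', h_norm⟩ := exists_mulVec_eq_of_isZeroOne h01
  rw [← hc'] at h01 hc
  have h_total : ∑ j, c' j = 1 := by
    rw [← sum_source_edges_incidence_mulVec, hc]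
    exact isDAG_layered.sum_source_edges_eq_one layeredTgt_ne_zero hL
  obtain ⟨j, rfl⟩ :=
    (isZeroOne_of_isZeroOne_mulVec h01 h_total h_norm).exists_eq_single_of_sum_eq_one h_total
  refine ⟨j, fun e => ?_⟩
  have h_e := congrFun (hc.symm.trans (mulVec_single_one _ j)) e
  by_cases e ∈ L <;> by_cases e ∈ layeredPath j <;> simp_all [incidence]

theorem pos_of_incidence_mulVec_eq {v w : Fin 8 → ℕ} (h_mono : Monotone w) (h0 : Odd (w 0))
    (h1 : Odd (w 1)) (h : incidence ℕ layeredPath *ᵥ v = incidence ℕ layeredPath *ᵥ w)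
    (j : Fin 8) : 0 < v j := by
  have h_ker : incidence ℤ layeredPath *ᵥ ((fun i => (v i : ℤ)) - fun i => (w i : ℤ)) = 0 := by
    rw [mulVec_sub, incidence_mulVec_natCast, incidence_mulVec_natCast, h, sub_self]
  obtain ⟨z, hz⟩ : ∃ z : ℤ, ∀ i, (v i : ℤ) - w i = z * pathRelation ℤ i :=
    ⟨_, congrFun (eq_smul_pathRelation h_ker)⟩
  have h_two : (v 0 : ℤ) - w 0 = z * 2 := hz 0
  have h_neg_two : (v 1 : ℤ) - w 1 = z * -2 := hz 1
  have hzj := hz j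
  rw [Nat.odd_iff] at h0 h1
  -- By parity `v 0` and `v 1` are nonzero, so `-w 0 < 2 * z < w 1`; the rest is `w j ± z`.
  have h01 : w 0 ≤ w 1 := h_mono (by decide)
  have hj := h_mono (Fin.zero_le j)
  rcases lt_or_ge j 2 with hj2 | hj2
  · obtain rfl | rfl : j = 0 ∨ j = 1 := by omega
    all_goals omega
  · have hj1 : w 1 ≤ w j := h_mono (by omega)
    have h_unit : ∀ i, 2 ≤ i → pathRelation ℤ i = 1 ∨ pathRelation ℤ i = -1 := by decide
    rcases h_unit j hj2 with h_unit | h_unit <;> rw [h_unit] at hzj <;> omega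

theorem exists_pos_ne_incidence_mulVec_eq {w : Fin 8 → ℕ}
    (hw : ∀ j, 0 < (w j : ℤ) + pathRelation ℤ j) :
    ∃ w' : Fin 8 → ℕ, (∀ j, 0 < w' j) ∧ w ≠ w' ∧
      incidence ℕ layeredPath *ᵥ w = incidence ℕ layeredPath *ᵥ w' := by
  choose w' hw' using fun j => Int.eq_ofNat_of_zero_le (hw j).le
  refine ⟨w', fun j => by have := hw j; have := hw' j; omega, ?_, ?_⟩
  · rintro rfl
    simpa [pathRelation] using hw' 0
  · funext e
    have h_shift : (fun j => (w' j : ℤ)) = (fun j => (w j : ℤ)) + (1 : ℤ) • pathRelation ℤ := by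
      rw [one_smul]
      exact funext fun j => (hw' j).symm
    have := incidence_mulVec_add_smul_pathRelation (fun j => (w j : ℤ)) 1
    rw [← h_shift, incidence_mulVec_natCast, incidence_mulVec_natCast] at this
    exact_mod_cast (congrFun this e).symm

theorem eight_le_of_range_le {w : Fin 8 → ℕ} (h_mono : Monotone w) (h0 : Odd (w 0))
    (h1 : Odd (w 1)) {k : ℕ} {Q : Fin k → List (Fin 21)} {u : Fin k → ℕ}
    (hQ : ∀ i, IsPath layeredSrc layeredTgt 0 6 (Q i))
    (h_eq : incidence ℕ layeredPath *ᵥ w = incidence ℕ Q *ᵥ u)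
    (h_range : LinearMap.range (incidence ℚ layeredPath).mulVecLin ≤
      LinearMap.range (incidence ℚ Q).mulVecLin) : 8 ≤ k := by
  by_contra! hk
  have h_rank : (incidence ℚ Q).rank ≤ (incidence ℚ layeredPath).rank := by
    have := seven_le_rank_incidence_layeredPath
    have := (incidence ℚ Q).rank_le_width
    omega
  have h_range_eq := Submodule.eq_of_le_of_finrank_le h_range h_rank
  have h_col (i : Fin k) : ∃ j, ∀ e, e ∈ Q i ↔ e ∈ layeredPath j := by
    refine exists_layeredPath_mem_iff (hQ i) ?_
    rw [h_range_eq, range_mulVecLin]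
    exact Submodule.subset_span ⟨i, rfl⟩
  choose g hg using h_col
  rw [incidence_eq_mul_submatrix_one ℕ hg, ← mulVec_mulVec] at h_eq
  have h_surj : Function.Surjective g := by
    intro j
    by_contra! hj
    refine (pos_of_incidence_mulVec_eq h_mono h0 h1 h_eq.symm j).ne' ?_
    simp [mulVec, dotProduct, one_apply, fun i => (hj i).symm]
  simpa using hk.trans_le (Fintype.card_le_of_surjective g h_surj)

end Concrete

/-- There is a DAG with a flow and a *minimum* flow decomposition into `8` positively
weighted paths whose edge-path incidence system admits two distinct positive integer
solutions; hence the system does not have full column rank, disproving the conjecture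
of Kloster et al. -/
theorem stmt_17 :
    ∃ (n m : ℕ) (src tgt : Fin m → Fin n) (s t : Fin n) (X : Fin m → ℕ)
      (P : Fin 8 → List (Fin m)) (w w' : Fin 8 → ℕ),
      IsDAG src tgt ∧ (∀ e, tgt e ≠ s) ∧ (∀ e, src e ≠ t) ∧
      IsFlowN src tgt s t X ∧
      (∀ i, IsPath src tgt s t (P i)) ∧
      (∀ i, 0 < w i) ∧ (∀ i, 0 < w' i) ∧ w ≠ w' ∧
      (∀ e, X e = ∑ i, if e ∈ P i then w i else 0) ∧
      (∀ e, X e = ∑ i, if e ∈ P i then w' i else 0) ∧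
      (∀ (k : ℕ) (Q : Fin k → List (Fin m)) (u : Fin k → ℕ),
        (∀ i, IsPath src tgt s t (Q i)) → (∀ i, 0 < u i) →
        (∀ e, X e = ∑ i, if e ∈ Q i then u i else 0) → 8 ≤ k) := by
  obtain ⟨N, hN_odd, hN_generic, hN⟩ := (Nat.frequently_odd.and_eventually
    ((eventually_range_incidence_le layeredPath).and (Filter.eventually_ge_atTop 3))).exists
  let w : Fin 8 → ℕ := fun j => N ^ (j : ℕ)
  have h_pos (j : Fin 8) : 0 < w j := by positivity
  have h_mono : Monotone w := fun i j hij => Nat.pow_le_pow_right (by omega) hij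
  have h_shift (j : Fin 8) : 0 < (w j : ℤ) + pathRelation ℤ j := by
    rcases eq_or_ne j 0 with rfl | hj
    · simp [w, pathRelation]
    · have h_le : N ≤ w j := Nat.le_self_pow (Fin.val_ne_zero_iff.2 hj) N
      have h_bound : ∀ j, -2 ≤ pathRelation ℤ j := by decide
      linarith [h_bound j, (by exact_mod_cast hN.trans h_le : (3 : ℤ) ≤ w j)]
  obtain ⟨w', hw'_pos, h_ne, h_eq⟩ := exists_pos_ne_incidence_mulVec_eq h_shift
  refine ⟨7, 21, layeredSrc, layeredTgt, 0, 6, (incidence ℕ layeredPath).mulVec w, layeredPath,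
    w, w', isDAG_layered, layeredTgt_ne_zero, by decide, ?_, isPath_layeredPath, h_pos, hw'_pos,
    h_ne, incidence_mulVec_apply _ _, ?_, fun k Q u hQ _ hX => ?_⟩
  · simpa only [← incidence_mulVec_apply] using
      isDAG_layered.isFlowN_sum_paths isPath_layeredPath w
  · rw [h_eq]
    exact incidence_mulVec_apply _ _
  · have hX' : (incidence ℕ layeredPath).mulVec w = (incidence ℕ Q).mulVec u :=
      funext fun e => (hX e).trans (incidence_mulVec_apply Q u e).symm
    exact eight_le_of_range_le h_mono (by simp [w]) (by simpa [w] using hN_odd) hQ hX'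
      (hN_generic k Q u hX')
end
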